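/- Let X be a geodesic, semi-locally simply connected metric space and let α : S¹_{|α|} → X be a geodesic circle. Then there exists ρ > 0 such that every loop β : S¹ → X whose image is contained in the open ρ-neighborhood of α(S¹) is freely homotopic to a k-fold concatenation of α for some k ∈ ℤ. -/

import Mathlib

open Set Metric
open scoped ENNReal

noncomputable section

section Loops

/-- A loop in a space `X`: a continuous map from the circle `ℝ/ℤ`
(of circumference 1). -/
abbrev MLoop (X : Type*) [TopologicalSpace X] : Type _ := C(AddCircle (1 : ℝ), X)

variable {X : Type*} [MetricSpace X]

/-- The length of a loop: its total variation over one period. -/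
def loopLength (γ : MLoop X) : ℝ≥0∞ :=
  eVariationOn (fun t : ℝ => γ (t : AddCircle (1 : ℝ))) (Set.Icc 0 1)

/-- Two loops are freely homotopic through the set `U`. -/
def FreelyHomotopicIn (U : Set X) (β γ : MLoop X) : Prop :=
  ∃ H : ContinuousMap.Homotopy β γ, Set.range ⇑H ⊆ U

/-- Two loops are freely homotopic (in all of `X`). -/
def FreelyHomotopic (β γ : MLoop X) : Prop :=
  FreelyHomotopicIn Set.univ β γ

/-- The reversed loop `α⁻`. -/
def loopReverse (γ : MLoop X) : MLoop X :=
  γ.comp ⟨fun t => -t, continuous_neg⟩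

/-- The `k`-fold concatenation of a loop, realized as the composition with the
degree-`k` self-map of the circle (the constant loop for `k = 0`, and the
`|k|`-fold concatenation of the reverse for `k < 0`). -/
def loopPow (γ : MLoop X) (k : ℤ) : MLoop X :=
  γ.comp ⟨fun t => k • t, continuous_zsmul k⟩

/-- A loop is null-homotopic (contractible) in `U` if it is freely homotopic in `U`
to a constant loop. -/
def NullHomotopicIn (U : Set X) (γ : MLoop X) : Prop :=
  ∃ x : X, FreelyHomotopicIn U γ (ContinuousMap.const _ x)

/-- `f` parametrizes a geodesic from `x` to `y` on the interval `[0, dist x y]`: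
it is an isometric embedding of this interval sending `0 ↦ x`, `dist x y ↦ y`. -/
def IsGeodesicSegment (f : ℝ → X) (x y : X) : Prop :=
  f 0 = x ∧ f (dist x y) = y ∧
    ∀ s ∈ Set.Icc (0 : ℝ) (dist x y), ∀ t ∈ Set.Icc (0 : ℝ) (dist x y),
      dist (f s) (f t) = |s - t|

/-- A metric space is geodesic if any two points are joined by a geodesic. -/
def GeodesicSpace (X : Type*) [MetricSpace X] : Prop :=
  ∀ x y : X, ∃ f : ℝ → X, IsGeodesicSegment f x y

/-- `X` is semi-locally simply connected: every point has a ball in which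
every loop is null-homotopic in `X`. -/
def SemiLocallySimplyConnected (X : Type*) [MetricSpace X] : Prop :=
  ∀ x : X, ∃ δ > (0 : ℝ), ∀ γ : MLoop X, Set.range ⇑γ ⊆ Metric.ball x δ →
    NullHomotopicIn Set.univ γ

/-- `α` is a geodesic circle of circumference `c` in `X`: as a map from the circle
of circumference `1` it rescales the (geodesic) circle distance by the factor `c`;
equivalently it corresponds to an isometric embedding of `S¹_c` into `X`. -/
def IsGeodesicCircle (α : MLoop X) (c : ℝ) : Prop :=
  0 < c ∧ ∀ s t : AddCircle (1 : ℝ), dist (α s) (α t) = c * dist s t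

/-- A bottleneck loop: a loop of finite length that is a shortest representative
of its free (unoriented) homotopy class within some neighbourhood of its image. -/
def IsBottleneckLoop (α : MLoop X) : Prop :=
  loopLength α ≠ ⊤ ∧
  ∃ U : Set X, IsOpen U ∧ Set.range ⇑α ⊆ U ∧
    ∀ β : MLoop X, Set.range ⇑β ⊆ U →
      (FreelyHomotopicIn U β α ∨ FreelyHomotopicIn U β (loopReverse α)) →
      loopLength α ≤ loopLength β

/-- A set is geodesically convex if every geodesic between its points lies in it. -/
def GeodesicallyConvex (N : Set X) : Prop :=
  ∀ x ∈ N, ∀ y ∈ N, ∀ f : ℝ → X, IsGeodesicSegment f x y →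
    ∀ t ∈ Set.Icc (0 : ℝ) (dist x y), f t ∈ N

/-- The perimeter of a triple: the length of any of its fillings. -/
def triplePerim (x₁ x₂ x₃ : X) : ℝ := dist x₁ x₂ + dist x₂ x₃ + dist x₃ x₁

/-- The diameter of a triple of points. -/
def tripleDiam (x₁ x₂ x₃ : X) : ℝ := max (dist x₁ x₂) (max (dist x₂ x₃) (dist x₃ x₁))

/-- The diameter of a quadruple of points. -/
def quadDiam (x₁ x₂ x₃ x₄ : X) : ℝ :=
  max (tripleDiam x₁ x₂ x₃) (max (dist x₁ x₄) (max (dist x₂ x₄) (dist x₃ x₄)))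

/-- `f : ℝ → X` traverses a filling of the (oriented) triple `(x₁, x₂, x₃)`:
it concatenates geodesics from `x₁` to `x₂`, from `x₂` to `x₃` and from `x₃` to
`x₁`, parametrized by arc length on `[0, triplePerim x₁ x₂ x₃]`. -/
def IsFillingFun (x₁ x₂ x₃ : X) (f : ℝ → X) : Prop :=
  f 0 = x₁ ∧ f (dist x₁ x₂) = x₂ ∧ f (dist x₁ x₂ + dist x₂ x₃) = x₃ ∧
  f (triplePerim x₁ x₂ x₃) = x₁ ∧
  (∀ s ∈ Set.Icc (0 : ℝ) (dist x₁ x₂), ∀ t ∈ Set.Icc (0 : ℝ) (dist x₁ x₂),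
    dist (f s) (f t) = |s - t|) ∧
  (∀ s ∈ Set.Icc (dist x₁ x₂) (dist x₁ x₂ + dist x₂ x₃),
    ∀ t ∈ Set.Icc (dist x₁ x₂) (dist x₁ x₂ + dist x₂ x₃), dist (f s) (f t) = |s - t|) ∧
  (∀ s ∈ Set.Icc (dist x₁ x₂ + dist x₂ x₃) (triplePerim x₁ x₂ x₃),
    ∀ t ∈ Set.Icc (dist x₁ x₂ + dist x₂ x₃) (triplePerim x₁ x₂ x₃),
    dist (f s) (f t) = |s - t|)

/-- The loop `L` is a filling of the oriented triple `(x₁, x₂, x₃)`. -/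
def IsFilling (x₁ x₂ x₃ : X) (L : MLoop X) : Prop :=
  ∃ f : ℝ → X, IsFillingFun x₁ x₂ x₃ f ∧
    ∀ t ∈ Set.Icc (0 : ℝ) 1, L (t : AddCircle (1 : ℝ)) = f (triplePerim x₁ x₂ x₃ * t)

/-- A triple of points of `N` is circumventing (w.r.t. the loop `α`) if each of its
fillings lying in `N` is freely homotopic to `α` or to `α⁻`. -/
def Circumventing (N : Set X) (α : MLoop X) (x₁ x₂ x₃ : X) : Prop :=
  x₁ ∈ N ∧ x₂ ∈ N ∧ x₃ ∈ N ∧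
  ∀ L : MLoop X, IsFilling x₁ x₂ x₃ L → Set.range ⇑L ⊆ N →
    (FreelyHomotopic L α ∨ FreelyHomotopic L (loopReverse α))

/-- The (oriented) triple `(x₁, x₂, x₃)` has winding number `k` with respect to the
oriented loop `α`: some filling of it is freely homotopic to the `k`-fold
concatenation of `α`. -/
def HasTripleWinding (α : MLoop X) (x₁ x₂ x₃ : X) (k : ℤ) : Prop :=
  ∃ L : MLoop X, IsFilling x₁ x₂ x₃ L ∧ FreelyHomotopic L (loopPow α k)

end Loops

/-! A loop `β` near `α` can be pushed onto `α`. Join each point of `β` to a nearby point of `α` by a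
short path, a rung. Over a small arc of `β` the two rungs, the arc and a short arc of `α` bound a
small quadrilateral, which is null-homotopic by semi-local simple connectedness; gluing the
quadrilaterals along their common rungs gives a path in the parameter circle whose image under `α`
is conjugate to `β` along a rung. Because `α` is an embedding, closeness in `X` of points of `α`
is closeness of their parameters, so these short arcs of `α` exist. Hence `β` is freely homotopic
to `α ∘ ψ` for a self-map `ψ` of the circle, and `ψ` is homotopic to `t ↦ k • t`, where `k` is its
degree. -/

open scoped Topology unitInterval

section LoopsAndPaths

variable {Y Z : Type*} [TopologicalSpace Y] [TopologicalSpace Z]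

/-- The path running once around the circle `ℝ/ℤ`, used to translate between loops as maps on the
circle and loops as paths with equal endpoints. -/
def circlePath : Path (0 : AddCircle (1 : ℝ)) 0 where
  toFun t := ((t : ℝ) : AddCircle (1 : ℝ))
  continuous_toFun := (AddCircle.continuous_mk' 1).comp continuous_subtype_val
  source' := by simp
  target' := by simp

theorem circlePath_apply (t : I) : circlePath t = ((t : ℝ) : AddCircle (1 : ℝ)) := rfl

theorem circlePath_surjective : Function.Surjective circlePath := by
  have : Fact ((0 : ℝ) < 1) := ⟨one_pos⟩
  intro z
  have hz : z ∈ ((↑) : ℝ → AddCircle (1 : ℝ)) '' Icc 0 (0 + 1) := by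
    rw [AddCircle.coe_image_Icc_eq]
    exact mem_univ z
  obtain ⟨t, ht, rfl⟩ := hz
  exact ⟨⟨t, by simpa only [zero_add] using ht⟩, rfl⟩

namespace MLoop

/-- A loop cut open at the base point `0` of the circle, as a path. -/
def toPath (γ : MLoop Y) : Path (γ 0) (γ 0) := circlePath.map γ.continuous

/-- A path with equal endpoints closed up to a map on the circle, inverse to `MLoop.toPath`. -/
def ofPath {a : Y} (p : Path a a) : MLoop Y :=
  haveI : Fact ((0 : ℝ) < 1) := ⟨one_pos⟩
  ⟨AddCircle.liftIco 1 0 p.extend,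
    AddCircle.liftIco_zero_continuous (by simp) p.continuous_extend.continuousOn⟩

theorem toPath_apply (γ : MLoop Y) (t : I) : γ.toPath t = γ (circlePath t) := rfl

theorem ofPath_circlePath {a : Y} (p : Path a a) (t : I) : ofPath p (circlePath t) = p t := by
  have : Fact ((0 : ℝ) < 1) := ⟨one_pos⟩
  change AddCircle.liftIco 1 0 p.extend (t : ℝ) = p t
  rcases eq_or_ne t 1 with rfl | ht
  · rw [← circlePath_apply, circlePath.target, ← AddCircle.coe_zero,
      AddCircle.liftIco_zero_coe_apply (by simp), p.extend_zero, p.target]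
  · rw [AddCircle.liftIco_zero_coe_apply (p := (1 : ℝ))
      ⟨t.2.1, unitInterval.lt_one_iff_ne_one.2 ht⟩, p.extend_apply t.2]

theorem ext_circlePath {γ δ : MLoop Y} (h : ∀ t, γ (circlePath t) = δ (circlePath t)) : γ = δ :=
  ContinuousMap.ext (circlePath_surjective.forall.2 h)

theorem ofPath_toPath (γ : MLoop Y) : ofPath γ.toPath = γ :=
  ext_circlePath fun t => ofPath_circlePath γ.toPath t

theorem range_ofPath {a : Y} (p : Path a a) : range (ofPath p) = range p := by
  rw [← circlePath_surjective.range_comp]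
  exact congrArg range (funext (ofPath_circlePath p))

theorem comp_ofPath (f : C(Y, Z)) {a : Y} (p : Path a a) :
    f.comp (ofPath p) = ofPath (p.map f.continuous) :=
  ext_circlePath fun t => by
    rw [ofPath_circlePath, ContinuousMap.comp_apply, ofPath_circlePath, Path.map_coe,
      Function.comp_apply]

theorem homotopic_of_square {a b : Y} {p : Path a a} {q : Path b b} (F : C(I × I, Y))
    (hF : ∀ s, F (s, 0) = F (s, 1)) (hp : ∀ t, F (0, t) = p t) (hq : ∀ t, F (1, t) = q t) :
    (ofPath p).Homotopic (ofPath q) := by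
  -- A homotopy of loops is a loop in the path space `C(I, Y)`.
  let G : C(I, C(I, Y)) := (F.comp ContinuousMap.prodSwap).curry
  have hG : G 1 = G 0 := ContinuousMap.ext fun s => (hF s).symm
  let L : MLoop C(I, Y) := ofPath ⟨G, rfl, hG⟩
  have hL : ∀ t s, L (circlePath t) s = F (s, t) := fun t s =>
    DFunLike.congr_fun (ofPath_circlePath _ t) s
  refine ⟨⟨L.uncurry.comp ContinuousMap.prodSwap, ?_, ?_⟩⟩ <;>
    refine circlePath_surjective.forall.2 fun t => ?_
  · exact (hL t 0).trans ((hp t).trans (ofPath_circlePath p t).symm)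
  · exact (hL t 1).trans ((hq t).trans (ofPath_circlePath q t).symm)

theorem homotopic_of_pathHomotopic {a : Y} {p q : Path a a} (h : p.Homotopic q) :
    (ofPath p).Homotopic (ofPath q) := by
  obtain ⟨H⟩ := h
  exact homotopic_of_square H.toContinuousMap (fun s => (H.source s).trans (H.target s).symm)
    H.apply_zero H.apply_one

theorem ofPath_conj_homotopic {a b : Y} (κ : Path a b) (q : Path b b) :
    (ofPath ((κ.trans q).trans κ.symm)).Homotopic (ofPath q) := by
  let tail (s : I) : Path (κ s) b := (κ.subpath s 1).cast rfl κ.target.symm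
  let P (s : I) : Path (κ s) (κ s) := ((tail s).trans q).trans (tail s).symm
  have htail : Continuous ↿tail :=
    κ.subpath_continuous_family.comp (by fun_prop : Continuous fun x : I × I => (x.1, (1 : I), x.2))
  have hP : Continuous ↿P :=
    Path.trans_continuous_family _
      (Path.trans_continuous_family _ htail _ (q.continuous.comp continuous_snd)) _
      (Path.symm_continuous_family _ htail)
  have h0 : tail 0 = κ.cast κ.source rfl := by
    simp only [tail, Path.subpath_zero_one]
    rfl
  have h1 : tail 1 = (Path.refl b).cast κ.target rfl := by
    simp only [tail, Path.subpath_self]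
    ext t
    simp
  have hslide : (ofPath ((κ.trans q).trans κ.symm)).Homotopic
      (ofPath (((Path.refl b).trans q).trans (Path.refl b).symm)) := by
    refine homotopic_of_square ⟨↿P, hP⟩ (fun s => (P s).source.trans (P s).target.symm)
      (fun t => ?_) (fun t => ?_)
    · change P 0 t = _
      simp only [P, h0]
      rfl
    · change P 1 t = _
      simp only [P, h1]
      rfl
  refine hslide.trans (homotopic_of_pathHomotopic ?_)
  rw [← Path.Homotopic.Quotient.eq]
  simp

theorem homotopic_of_conj {a b : Y} {p : Path a a} {q : Path b b} (κ : Path a b)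
    (h : (p.trans κ).Homotopic (κ.trans q)) : (ofPath p).Homotopic (ofPath q) := by
  refine .trans (homotopic_of_pathHomotopic ?_) (ofPath_conj_homotopic κ q)
  rw [← Path.Homotopic.Quotient.eq] at h ⊢
  simp [← h]

theorem toPath_homotopic_refl_of_nullhomotopic {γ : MLoop Y} (h : γ.Nullhomotopic) :
    γ.toPath.Homotopic (Path.refl (γ 0)) := by
  obtain ⟨y, ⟨H⟩⟩ := h
  obtain ⟨κ, hκ⟩ : ∃ κ : Path (γ 0) y, (γ.toPath.trans κ).Homotopic (κ.trans (Path.refl y)) :=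
    ⟨H.evalAt 0, Path.Homotopic.map_trans_evalAt H circlePath⟩
  rw [← Path.Homotopic.Quotient.eq] at hκ ⊢
  simpa using congrArg (·.trans (Path.Homotopic.Quotient.mk κ).symm) hκ

theorem pathHomotopic_refl_of_nullhomotopic {a : Y} {p : Path a a}
    (h : (ofPath p).Nullhomotopic) : p.Homotopic (Path.refl a) := by
  have ha : a = ofPath p 0 := by
    rw [← circlePath.source, ofPath_circlePath, p.source]
  have hp : (ofPath p).toPath.cast ha ha = p := Path.ext (funext (ofPath_circlePath p))
  have hrefl : (Path.refl (ofPath p 0)).cast ha ha = Path.refl a :=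
    Path.ext (funext fun _ => ha.symm)
  rw [← hp, ← hrefl]
  exact (toPath_homotopic_refl_of_nullhomotopic h).pathCast ha ha

theorem pathHomotopic_of_nullhomotopic {x y : Y} {p q : Path x y}
    (h : (ofPath (p.trans q.symm)).Nullhomotopic) : p.Homotopic q := by
  have hrefl := pathHomotopic_refl_of_nullhomotopic h
  rw [← Path.Homotopic.Quotient.eq] at hrefl ⊢
  simpa using congrArg (·.trans (Path.Homotopic.Quotient.mk q)) hrefl

theorem exists_homotopic_zsmul (ψ : MLoop (AddCircle (1 : ℝ))) :
    ∃ k : ℤ, ψ.Homotopic ⟨fun t => k • t, continuous_zsmul k⟩ := by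
  obtain ⟨x, hx⟩ := QuotientAddGroup.mk_surjective (ψ 0)
  obtain ⟨Γ, hlift, -⟩ := (AddCircle.isCoveringMap_coe (1 : ℝ)).exists_path_lifts
    ψ.toPath.toContinuousMap x (ψ.toPath.source.trans hx.symm)
  have hΓ (t : I) : (Γ t : AddCircle (1 : ℝ)) = ψ (circlePath t) := congrFun hlift t
  obtain ⟨k, hdiff⟩ : ∃ k : ℤ, k • (1 : ℝ) = Γ 1 - Γ 0 := by
    rw [← AddCircle.coe_eq_zero_iff, AddCircle.coe_sub, hΓ, hΓ, circlePath.source,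
      circlePath.target, sub_self]
  have hk : Γ 1 = Γ 0 + k := by
    rw [zsmul_one] at hdiff
    rw [hdiff, add_sub_cancel]
  have hcoe (r : ℝ) : ((r + k : ℝ) : AddCircle (1 : ℝ)) = r := by
    rw [AddCircle.coe_add, add_eq_left, AddCircle.coe_eq_zero_iff]
    exact ⟨k, zsmul_one k⟩
  -- The straight-line homotopy in `ℝ` from `Γ` to `t ↦ k * t` descends to loops, because both
  -- paths gain `k` between `0` and `1`.
  let F : C(I × I, AddCircle (1 : ℝ)) :=
    ⟨fun x => (((1 - x.1) * Γ x.2 + x.1 * (k * x.2) : ℝ) : AddCircle (1 : ℝ)),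
      (AddCircle.continuous_mk' 1).comp (by fun_prop)⟩
  refine ⟨k, ?_⟩
  rw [← ofPath_toPath ψ, ← ofPath_toPath ⟨fun t => k • t, continuous_zsmul k⟩]
  refine homotopic_of_square F (fun s => ?_) (fun t => ?_) (fun t => ?_)
  · have hs : (1 - s) * Γ 1 + s * (k * (1 : I)) = (1 - s) * Γ 0 + s * (k * (0 : I)) + (k : ℝ) := by
      rw [hk, Icc.coe_zero, Icc.coe_one]
      ring
    exact (hcoe _).symm.trans (congrArg _ hs.symm)
  · simp [F, hΓ, toPath_apply]
  · have ht : (1 - ((1 : I) : ℝ)) * Γ t + (1 : I) * (k * t) = k • (t : ℝ) := by simp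
    exact congrArg _ ht

end MLoop

/-- Any two paths in `S` with the same endpoints are homotopic. This is semi-local simple
connectedness expressed for paths: the homotopy may leave `S`. -/
def PathsHomotopicIn (S : Set Y) : Prop :=
  ∀ ⦃x y : Y⦄ (p q : Path x y), range p ⊆ S → range q ⊆ S → p.Homotopic q

theorem PathsHomotopicIn.mono {S T : Set Y} (hT : PathsHomotopicIn T) (h : S ⊆ T) :
    PathsHomotopicIn S :=
  fun _ _ p q hp hq => hT p q (hp.trans h) (hq.trans h)

theorem pathsHomotopicIn_of_nullhomotopic {S : Set Y}
    (h : ∀ γ : MLoop Y, range γ ⊆ S → γ.Nullhomotopic) : PathsHomotopicIn S := by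
  intro x y p q hp hq
  refine MLoop.pathHomotopic_of_nullhomotopic (h _ ?_)
  rw [MLoop.range_ofPath, Path.trans_range, Path.symm_range]
  exact union_subset hp hq

end LoopsAndPaths

section UniformRadii

variable {A X : Type*} [TopologicalSpace A] [PseudoMetricSpace X]

theorem exists_uniform_pathsHomotopicIn_ball {K : Set X} (hK : IsCompact K)
    (h : ∀ x ∈ K, ∃ δ > 0, PathsHomotopicIn (ball x δ)) :
    ∃ δ > 0, ∀ x ∈ K, PathsHomotopicIn (ball x δ) := by
  choose! δ hδ hpaths using h
  obtain ⟨ε, hε, hball⟩ := lebesgue_number_lemma_of_metric hK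
    (c := fun x : K => ball (x : X) (δ x)) (fun _ => isOpen_ball)
    fun x hx => mem_iUnion.2 ⟨⟨x, hx⟩, mem_ball_self (hδ x hx)⟩
  refine ⟨ε, hε, fun x hx => ?_⟩
  obtain ⟨y, hy⟩ := hball x hx
  exact (hpaths y y.2).mono hy

theorem exists_uniform_joinedIn_preimage_ball [LocallyPathConnectedSpace A] {f : A → X}
    (hf : Topology.IsInducing f) {K : Set A} (hK : IsCompact K) {δ : ℝ} (hδ : 0 < δ) :
    ∃ ε > 0, ∀ a ∈ K, ∀ b, dist (f b) (f a) < ε → JoinedIn (f ⁻¹' ball (f a) δ) a b := by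
  let U (a : A) : Set A := f ⁻¹' ball (f a) (δ / 2)
  have hU (a : A) : ∃ r > 0, f ⁻¹' ball (f a) r ⊆ pathComponentIn (U a) a :=
    (hf.basis_nhds nhds_basis_ball).mem_iff.1 <| pathComponentIn_mem_nhds <|
      hf.continuous.continuousAt.preimage_mem_nhds (ball_mem_nhds _ (half_pos hδ))
  choose r hr hrU using hU
  obtain ⟨ε, hε, hball⟩ := lebesgue_number_lemma_of_metric (hK.image hf.continuous)
    (c := fun c : A => ball (f c) (r c)) (fun _ => isOpen_ball) <| by
      rintro _ ⟨a, -, rfl⟩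
      exact mem_iUnion.2 ⟨a, mem_ball_self (hr a)⟩
  refine ⟨ε, hε, fun a ha b hab => ?_⟩
  obtain ⟨c, hc⟩ := hball (f a) (mem_image_of_mem f ha)
  have hca : JoinedIn (U c) c a := hrU c (hc (mem_ball_self hε))
  have hcb : JoinedIn (U c) c b := hrU c (hc hab)
  refine (hca.symm.trans hcb).mono (preimage_mono (ball_subset_ball' ?_))
  have hac : dist (f a) (f c) < δ / 2 := hca.target_mem
  rw [dist_comm]
  linarith

end UniformRadii

section Shadows

variable {A X : Type*} [TopologicalSpace A] [PseudoMetricSpace X] {α : C(A, X)} {r : ℝ}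
  {x y z : X}

/-- The path `p` is shadowed by `α`: for all rungs `κ`, `κ'` joining its endpoints to points `α a`,
`α b` at distance less than `r`, the path `κ⁻¹ * p * κ'` is homotopic to the image under `α` of a
path from `a` to `b`. All rungs are allowed, rather than chosen ones, so that shadowed paths can be
concatenated. -/
def IsShadowed (α : C(A, X)) (r : ℝ) (p : Path x y) : Prop :=
  ∀ ⦃a b : A⦄ (κ : Path x (α a)) (κ' : Path y (α b)),
    range κ ⊆ ball (α a) r → range κ' ⊆ ball (α b) r →
    ∃ q : Path a b, (p.trans κ').Homotopic (κ.trans (q.map α.continuous))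

namespace IsShadowed

theorem of_homotopic {p p' : Path x y} (hp : IsShadowed α r p) (h : p.Homotopic p') :
    IsShadowed α r p' := fun _ _ κ κ' hκ hκ' =>
  let ⟨q, hq⟩ := hp κ κ' hκ hκ'
  ⟨q, (h.symm.hcomp (.refl κ')).trans hq⟩

theorem cast {x' y' : X} {p : Path x y} (hp : IsShadowed α r p) (hx : x' = x) (hy : y' = y) :
    IsShadowed α r (p.cast hx hy) := by
  subst hx hy
  exact hp

theorem trans {p : Path x y} {p' : Path y z} (hp : IsShadowed α r p) (hp' : IsShadowed α r p')
    (hy : ∃ b, JoinedIn (ball (α b) r) y (α b)) : IsShadowed α r (p.trans p') := by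
  intro a c κ κ'' hκ hκ''
  obtain ⟨b, κ', hκ'⟩ := hy
  obtain ⟨q, hq⟩ := hp κ κ' hκ (range_subset_iff.2 hκ')
  obtain ⟨q', hq'⟩ := hp' κ' κ'' (range_subset_iff.2 hκ') hκ''
  refine ⟨q.trans q', ?_⟩
  rw [← Path.Homotopic.Quotient.eq] at hq hq' ⊢
  simp only [Path.Homotopic.Quotient.mk_trans, Path.map_trans] at hq hq' ⊢
  rw [Path.Homotopic.Quotient.trans_assoc, hq', ← Path.Homotopic.Quotient.trans_assoc, hq,
    Path.Homotopic.Quotient.trans_assoc]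

theorem of_range_subset_ball {δ : ℝ} (hr : 5 * r ≤ δ)
    (hpaths : ∀ a, PathsHomotopicIn (ball (α a) δ))
    (hjoined : ∀ a b, dist (α b) (α a) < 4 * r → JoinedIn (α ⁻¹' ball (α a) δ) a b)
    {p : Path x y} (hp : range p ⊆ ball z r) : IsShadowed α r p := by
  intro a b κ κ' hκ hκ'
  have hr0 : 0 < r := nonempty_ball.1 ((range_nonempty p).mono hp)
  have hxz : dist x z < r := by simpa using hp ⟨0, rfl⟩
  have hyz : dist y z < r := by simpa using hp ⟨1, rfl⟩
  have hxa : dist x (α a) < r := by simpa using hκ ⟨0, rfl⟩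
  have hyb : dist y (α b) < r := by simpa using hκ' ⟨0, rfl⟩
  have hza : dist z (α a) < 2 * r := by linarith [dist_triangle_left z (α a) x]
  have hba : dist (α b) (α a) < 4 * r := by
    linarith [dist_triangle_left (α b) (α a) y, dist_triangle y z (α a)]
  obtain ⟨q, hq⟩ := hjoined a b hba
  refine ⟨q, hpaths a _ _ ?_ ?_⟩
  · rw [Path.trans_range]
    exact union_subset (hp.trans (ball_subset_ball' (by linarith)))
      (hκ'.trans (ball_subset_ball' (by linarith)))
  · rw [Path.trans_range]
    exact union_subset (hκ.trans (ball_subset_ball (by linarith)))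
      (range_subset_iff.2 hq)

theorem of_local {p : Path x y} (hr : 0 < r)
    (hsmall : ∀ ⦃u v w : X⦄ (q : Path u v), range q ⊆ ball w r → IsShadowed α r q)
    (hp : ∀ t, ∃ b, JoinedIn (ball (α b) r) (p t) (α b)) : IsShadowed α r p := by
  have htrans : IsTrans I fun s t => IsShadowed α r (p.subpath s t) :=
    ⟨fun s t u hst htu => (hst.trans htu (hp t)).of_homotopic
      ⟨Path.Homotopy.subpathTransSubpath p s t u⟩⟩
  have hlocal (s : I) : ∀ᶠ t in 𝓝 s,
      IsShadowed α r (p.subpath s t) ∧ IsShadowed α r (p.subpath t s) := by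
    have hball : p ⁻¹' ball (p s) r ∈ 𝓝 s :=
      p.continuous.continuousAt.preimage_mem_nhds (ball_mem_nhds _ hr)
    have huIcc : ∀ᶠ t in 𝓝 s, uIcc s t ⊆ p ⁻¹' ball (p s) r :=
      (tendsto_const_nhds.uIcc Filter.tendsto_id).eventually
        (Filter.eventually_smallSets_subset.2 hball)
    filter_upwards [huIcc] with t ht
    constructor <;> refine hsmall (w := p s) _ ?_ <;> rw [Path.range_subpath, image_subset_iff]
    · exact ht
    · rwa [uIcc_comm]
  have h01 := (PreconnectedSpace.induction₂' _ hlocal htrans 0 1).cast p.source.symm p.target.symm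
  rwa [Path.subpath_zero_one] at h01

theorem exists_homotopic_comp {β : MLoop X} (hβ : IsShadowed α r β.toPath)
    (h0 : ∃ a, JoinedIn (ball (α a) r) (β 0) (α a)) : ∃ ψ : MLoop A, β.Homotopic (α.comp ψ) := by
  obtain ⟨a, κ, hκ⟩ := h0
  obtain ⟨q, hq⟩ := hβ κ κ (range_subset_iff.2 hκ) (range_subset_iff.2 hκ)
  refine ⟨MLoop.ofPath q, ?_⟩
  rw [MLoop.comp_ofPath, ← MLoop.ofPath_toPath β]
  exact MLoop.homotopic_of_conj κ hq

end IsShadowed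

theorem exists_homotopic_comp_of_range_subset_thickening [CompactSpace A]
    [LocallyPathConnectedSpace A] [LocallyPathConnectedSpace X]
    (hX : ∀ a, ∃ δ > 0, PathsHomotopicIn (ball (α a) δ)) (hα : Topology.IsInducing α) :
    ∃ ρ > 0, ∀ β : MLoop X, range β ⊆ thickening ρ (range α) →
      ∃ ψ : MLoop A, β.Homotopic (α.comp ψ) := by
  have hK : IsCompact (range α) := isCompact_range α.continuous
  obtain ⟨δ, hδ, hpaths⟩ :=
    exists_uniform_pathsHomotopicIn_ball hK (forall_mem_range.2 hX)
  obtain ⟨ε, hε, hjoinedA⟩ := exists_uniform_joinedIn_preimage_ball hα isCompact_univ hδ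
  obtain ⟨r, hr, hrδ, hrε⟩ : ∃ r > 0, 5 * r ≤ δ ∧ 4 * r ≤ ε :=
    ⟨min (δ / 5) (ε / 4), by positivity, by linarith [min_le_left (δ / 5) (ε / 4)],
      by linarith [min_le_right (δ / 5) (ε / 4)]⟩
  obtain ⟨ρ, hρ, hjoinedX⟩ :=
    exists_uniform_joinedIn_preimage_ball (A := X) Topology.IsInducing.id hK hr
  refine ⟨ρ, hρ, fun β hβ => ?_⟩
  have hrung (t : AddCircle (1 : ℝ)) : ∃ a, JoinedIn (ball (α a) r) (β t) (α a) := by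
    obtain ⟨_, ⟨a, rfl⟩, ha⟩ := mem_thickening_iff.1 (hβ (mem_range_self t))
    exact ⟨a, (hjoinedX (α a) (mem_range_self a) (β t) ha).symm⟩
  have hsmall ⦃u v w : X⦄ (q : Path u v) (hq : range q ⊆ ball w r) : IsShadowed α r q :=
    .of_range_subset_ball hrδ (fun a => hpaths _ (mem_range_self a))
      (fun a b hab => hjoinedA a (mem_univ a) b (hab.trans_le hrε)) hq
  have hshadow : IsShadowed α r β.toPath := .of_local hr hsmall fun t => hrung (circlePath t)
  exact hshadow.exists_homotopic_comp (hrung 0)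

end Shadows

section Geodesics

variable {X : Type*} [MetricSpace X]

theorem IsGeodesicSegment.continuousOn {f : ℝ → X} {x y : X} (hf : IsGeodesicSegment f x y) :
    ContinuousOn f (Icc 0 (dist x y)) :=
  (LipschitzOnWith.of_dist_le_mul (K := 1) fun s hs t ht => by
    rw [hf.2.2 s hs t ht, NNReal.coe_one, one_mul, Real.dist_eq]).continuousOn

theorem IsGeodesicSegment.joinedIn_ball {f : ℝ → X} {x y : X} {r : ℝ}
    (hf : IsGeodesicSegment f x y) (hr : dist x y < r) : JoinedIn (ball x r) x y := by
  have h0 : (0 : ℝ) ∈ Icc 0 (dist x y) := left_mem_Icc.2 dist_nonneg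
  have h1 : dist x y ∈ Icc 0 (dist x y) := right_mem_Icc.2 dist_nonneg
  have hpath : IsPathConnected (f '' Icc 0 (dist x y)) :=
    ((convex_Icc _ _).isPathConnected ⟨0, h0⟩).image' hf.continuousOn
  refine (hpath.joinedIn x ⟨0, h0, hf.1⟩ y ⟨_, h1, hf.2.1⟩).mono ?_
  rintro _ ⟨t, ht, rfl⟩
  have hdist : dist (f t) x = t := by
    rw [← hf.1, hf.2.2 t ht 0 h0, sub_zero, abs_of_nonneg ht.1]
  rw [mem_ball, hdist]
  exact ht.2.trans_lt hr

theorem GeodesicSpace.locallyPathConnectedSpace (h : GeodesicSpace X) :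
    LocallyPathConnectedSpace X :=
  .of_bases (fun _ => nhds_basis_ball) fun x _ hr =>
    ⟨x, mem_ball_self hr, fun {y} hy =>
      let ⟨_, hf⟩ := h x y
      hf.joinedIn_ball (mem_ball'.1 hy)⟩

theorem IsGeodesicCircle.injective {α : MLoop X} {c : ℝ} (hα : IsGeodesicCircle α c) :
    Function.Injective α := fun s t hst => by
  have hdist := hα.2 s t
  rw [hst, dist_self, zero_eq_mul, or_iff_right hα.1.ne'] at hdist
  exact dist_eq_zero.1 hdist

end Geodesics

section FreeHomotopy

variable {X : Type*} [MetricSpace X]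

theorem freelyHomotopic_iff {β γ : MLoop X} : FreelyHomotopic β γ ↔ β.Homotopic γ :=
  ⟨fun ⟨H, _⟩ => ⟨H⟩, fun ⟨H⟩ => ⟨H, subset_univ _⟩⟩

theorem SemiLocallySimplyConnected.exists_pathsHomotopicIn_ball
    (h : SemiLocallySimplyConnected X) (x : X) : ∃ δ > 0, PathsHomotopicIn (ball x δ) := by
  obtain ⟨δ, hδ, hnull⟩ := h x
  refine ⟨δ, hδ, pathsHomotopicIn_of_nullhomotopic fun γ hγ => ?_⟩
  obtain ⟨y, hy⟩ := hnull γ hγ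
  exact ⟨y, freelyHomotopic_iff.1 hy⟩

theorem stmt1_general [LocallyPathConnectedSpace X] (hslsc : SemiLocallySimplyConnected X)
    (α : MLoop X) (hα : Function.Injective α) :
    ∃ ρ > (0 : ℝ), ∀ β : MLoop X, range β ⊆ thickening ρ (range α) →
      ∃ k : ℤ, FreelyHomotopic β (loopPow α k) := by
  have : Fact ((0 : ℝ) < 1) := ⟨one_pos⟩
  have : LocallyPathConnectedSpace (AddCircle (1 : ℝ)) :=
    (QuotientAddGroup.isQuotientMap_mk _).locallyPathConnectedSpace
  obtain ⟨ρ, hρ, hpush⟩ := exists_homotopic_comp_of_range_subset_thickening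
    (fun t => hslsc.exists_pathsHomotopicIn_ball (α t))
    (α.continuous.isClosedEmbedding hα).isInducing
  refine ⟨ρ, hρ, fun β hβ => ?_⟩
  obtain ⟨ψ, hβψ⟩ := hpush β hβ
  obtain ⟨k, hψk⟩ := MLoop.exists_homotopic_zsmul ψ
  exact ⟨k, freelyHomotopic_iff.2 (hβψ.trans ((ContinuousMap.Homotopic.refl α).comp hψk))⟩

end FreeHomotopy

section Statement

variable {X : Type*} [MetricSpace X]

/-- Lemma 2.2. -/
theorem stmt1 (hgeo : GeodesicSpace X) (hslsc : SemiLocallySimplyConnected X)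
    (α : MLoop X) (c : ℝ) (hα : IsGeodesicCircle α c) :
    ∃ ρ > (0 : ℝ), ∀ β : MLoop X,
      Set.range ⇑β ⊆ Metric.thickening ρ (Set.range ⇑α) →
      ∃ k : ℤ, FreelyHomotopic β (loopPow α k) := by
  have := hgeo.locallyPathConnectedSpace
  exact stmt1_general hslsc α hα.injective

end Statement

end
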